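/- arXiv:2109.14533 — 2 statements merged into one kernel-verified Lean document; each statement's English description precedes it below -/
import Mathlib

section
/- For every integer k ≥ 1, the real vector space V_I(T̂) = {v ∈ P_k × P_k : v(z) = 0 for every z ∈ ∂T̂} has dimension k² − 3k + 2 = (k−1)(k−2). -/
/-! A polynomial vanishing on a line segment is divisible by the affine form defining the line
(`dvd_of_vanish_param`). Applying this to the three open edges of the triangle in turn, a polynomial
vanishes on the boundary iff it is a multiple of the cubic bubble `b = x y (1 - x - y)`
(`exists_bubble_mul`). Since degrees add in a polynomial ring over a field, multiplication by `b`
identifies pairs of polynomials all of whose monomials have degree at most `k - 3` with `V_I`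
(`VI_eq_range`). The number of such monomials is `1 + 2 + ⋯ + (k - 2)`, so that
`dim V_I = 2 · (k - 1)(k - 2) / 2`. Writing the degree bound as `degree + 3 ≤ k` makes the argument
uniform in `k`, the set of monomials being empty for `k ≤ 2`. -/

open MeasureTheory Matrix

noncomputable section

/-- The reference triangle `T̂ = {(x,y) : 0 ≤ x, 0 ≤ y, x + y ≤ 1}`. -/
def Tref : Set (ℝ × ℝ) := {z : ℝ × ℝ | 0 ≤ z.1 ∧ 0 ≤ z.2 ∧ z.1 + z.2 ≤ 1}

/-- Real polynomial functions on `ℝ²` of total degree at most `k`. -/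
def PolyFun (k : ℕ) : Set ((ℝ × ℝ) → ℝ) :=
  {f | ∃ P : MvPolynomial (Fin 2) ℝ, P.totalDegree ≤ k ∧
    ∀ z : ℝ × ℝ, f z = MvPolynomial.eval ![z.1, z.2] P}

/-- `curl φ = (∂φ/∂y, −∂φ/∂x)`. -/
def pcurl (φ : (ℝ × ℝ) → ℝ) : (ℝ × ℝ) → ℝ × ℝ :=
  fun z => (fderiv ℝ φ z (0, 1), -(fderiv ℝ φ z (1, 0)))

/-- `div v = ∂v₁/∂x + ∂v₂/∂y`. -/
def pdiv (v : (ℝ × ℝ) → ℝ × ℝ) : (ℝ × ℝ) → ℝ :=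
  fun z => fderiv ℝ (fun w => (v w).1) z (1, 0) + fderiv ℝ (fun w => (v w).2) z (0, 1)

/-- `Σ_I(T̂)`: polynomials of degree at most `k+1` with vanishing value and gradient on `∂T̂`. -/
def SigmaI (k : ℕ) : Set ((ℝ × ℝ) → ℝ) :=
  {φ | φ ∈ PolyFun (k + 1) ∧ ∀ z ∈ frontier Tref, φ z = 0 ∧ fderiv ℝ φ z = 0}

/-- `V_I(T̂)`: pairs of polynomials of degree at most `k` vanishing on `∂T̂`. -/
def VI (k : ℕ) : Set ((ℝ × ℝ) → ℝ × ℝ) :=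
  {v | (fun z => (v z).1) ∈ PolyFun k ∧ (fun z => (v z).2) ∈ PolyFun k ∧
    ∀ z ∈ frontier Tref, v z = 0}

/-- `Q_I(T̂)`: polynomials of degree at most `k−1` with vanishing mean over `T̂` and vanishing
value at the three vertices. -/
def QI (k : ℕ) : Set ((ℝ × ℝ) → ℝ) :=
  {q | q ∈ PolyFun (k - 1) ∧ (∫ z in Tref, q z) = 0 ∧
    q (0, 0) = 0 ∧ q (1, 0) = 0 ∧ q (0, 1) = 0}


/-- If the line `L = 0` is parametrized by `t ↦ (a t, b t)`, with the polynomial `c` recovering the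
parameter modulo `L`, then a polynomial vanishing on the line for `0 < t < 1` is a multiple of `L`.
Indeed modulo `L` it equals its restriction to the line, re-expanded in the parameter `c`. -/
lemma dvd_of_vanish_param (L c : MvPolynomial (Fin 2) ℝ) (a b : Polynomial ℝ)
    (ha : L ∣ MvPolynomial.X 0 - Polynomial.aeval c a)
    (hb : L ∣ MvPolynomial.X 1 - Polynomial.aeval c b)
    (P : MvPolynomial (Fin 2) ℝ)
    (hP : ∀ t : ℝ, 0 < t → t < 1 → MvPolynomial.eval ![a.eval t, b.eval t] P = 0) : L ∣ P := by
  set τ : MvPolynomial (Fin 2) ℝ →ₐ[ℝ] Polynomial ℝ := MvPolynomial.aeval ![a, b] with hτ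
  have hτP : τ P = 0 := by
    apply Polynomial.eq_zero_of_infinite_isRoot
    refine (Set.Ioo_infinite (zero_lt_one' ℝ)).mono fun t ht => ?_
    have h : ((Polynomial.aeval t).comp τ) = MvPolynomial.aeval ![a.eval t, b.eval t] := by
      apply MvPolynomial.algHom_ext
      intro i
      fin_cases i <;> simp [hτ]
    have h2 := DFunLike.congr_fun h P
    have hPt := hP t ht.1 ht.2
    rw [← MvPolynomial.coe_aeval_eq_eval] at hPt
    rw [RingHom.coe_coe] at hPt
    rw [hPt] at h2
    simpa [Polynomial.aeval_def, Polynomial.eval₂_eq_eval_map] using h2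
  have h : (Ideal.Quotient.mkₐ ℝ (Ideal.span {L})) =
      ((Ideal.Quotient.mkₐ ℝ (Ideal.span {L})).comp (Polynomial.aeval c)).comp τ := by
    apply MvPolynomial.algHom_ext
    intro i
    rw [← sub_eq_zero]
    fin_cases i
    · simpa [hτ, ← map_sub, Ideal.Quotient.eq_zero_iff_dvd] using ha
    · simpa [hτ, ← map_sub, Ideal.Quotient.eq_zero_iff_dvd] using hb
  have h2 := DFunLike.congr_fun h P
  simp only [AlgHom.comp_apply, hτP, map_zero] at h2
  exact (Ideal.Quotient.eq_zero_iff_dvd _ _).1 h2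

/-- A point of the triangle from which some direction leaves the triangle at once is a
boundary point. -/
lemma mem_frontier_of_dir {z : ℝ × ℝ} (hz : z ∈ Tref) (d : ℝ × ℝ)
    (hd : ∀ s : ℝ, 0 < s → z + s • d ∉ Tref) : z ∈ frontier Tref := by
  refine ⟨subset_closure hz, fun hi => ?_⟩
  rw [mem_interior_iff_mem_nhds] at hi
  have ht : Filter.Tendsto (fun s : ℝ => z + s • d) (nhds 0) (nhds z) := by
    have : Continuous (fun s : ℝ => z + s • d) := by fun_prop
    simpa using this.tendsto 0
  have h1 : ∀ᶠ s in nhdsWithin (0 : ℝ) (Set.Ioi 0), z + s • d ∈ Tref :=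
    (ht.eventually hi).filter_mono nhdsWithin_le_nhds
  obtain ⟨s, hs, hs0⟩ := (h1.and self_mem_nhdsWithin).exists
  exact hd s hs0 hs

lemma isClosed_Tref : IsClosed Tref :=
  (isClosed_le continuous_const continuous_fst).inter
    ((isClosed_le continuous_const continuous_snd).inter
      (isClosed_le (continuous_fst.add continuous_snd) continuous_const))

lemma frontier_Tref_edges {z : ℝ × ℝ} (hz : z ∈ frontier Tref) :
    z.1 = 0 ∨ z.2 = 0 ∨ z.1 + z.2 = 1 := by
  have hT : z ∈ Tref := isClosed_Tref.frontier_subset hz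
  by_contra! h
  apply hz.2
  have hopen : IsOpen {w : ℝ × ℝ | 0 < w.1 ∧ 0 < w.2 ∧ w.1 + w.2 < 1} :=
    (isOpen_lt continuous_const continuous_fst).inter
      ((isOpen_lt continuous_const continuous_snd).inter
        (isOpen_lt (continuous_fst.add continuous_snd) continuous_const))
  have hsub : {w : ℝ × ℝ | 0 < w.1 ∧ 0 < w.2 ∧ w.1 + w.2 < 1} ⊆ Tref :=
    fun w hw => ⟨hw.1.le, hw.2.1.le, hw.2.2.le⟩
  exact interior_maximal hsub hopen
    ⟨lt_of_le_of_ne hT.1 h.1.symm, lt_of_le_of_ne hT.2.1 h.2.1.symm, lt_of_le_of_ne hT.2.2 h.2.2⟩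

/-- The cubic bubble `x y (1 - x - y)`. -/
def bubble : MvPolynomial (Fin 2) ℝ :=
  MvPolynomial.X 0 * MvPolynomial.X 1 * (1 - MvPolynomial.X 0 - MvPolynomial.X 1)

lemma eval_bubble (x y : ℝ) : MvPolynomial.eval ![x, y] bubble = x * y * (1 - x - y) := by
  simp [bubble]

lemma eval_bubble_frontier {z : ℝ × ℝ} (hz : z ∈ frontier Tref) :
    MvPolynomial.eval ![z.1, z.2] bubble = 0 := by
  rw [eval_bubble]
  rcases frontier_Tref_edges hz with h | h | h
  · simp [h]
  · simp [h]
  · rw [sub_sub, h]; simp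

lemma exists_bubble_mul (P : MvPolynomial (Fin 2) ℝ)
    (hP : ∀ z ∈ frontier Tref, MvPolynomial.eval ![z.1, z.2] P = 0) : ∃ Q, P = bubble * Q := by
  obtain ⟨P₁, rfl⟩ := dvd_of_vanish_param (MvPolynomial.X 0) (MvPolynomial.X 1) 0 Polynomial.X
    (by simp) (by simp) P (fun t h0 h1 => by
      have := hP (0, t) (mem_frontier_of_dir ⟨le_rfl, h0.le, by simpa using h1.le⟩ (-1, 0)
        (fun s hs h => by have := h.1; simp at this; linarith))
      simpa using this)
  obtain ⟨P₂, rfl⟩ := dvd_of_vanish_param (MvPolynomial.X 1) (MvPolynomial.X 0) Polynomial.X 0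
    (by simp) (by simp) P₁ (fun t h0 h1 => by
      have := hP (t, 0) (mem_frontier_of_dir ⟨h0.le, le_rfl, by simpa using h1.le⟩ (0, -1)
        (fun s hs h => by have := h.2.1; simp at this; linarith))
      simpa [h0.ne'] using this)
  obtain ⟨P₃, rfl⟩ := dvd_of_vanish_param (1 - MvPolynomial.X 0 - MvPolynomial.X 1)
    (MvPolynomial.X 0) Polynomial.X (1 - Polynomial.X)
    (by simp) (by rw [← dvd_neg]; simp) P₂ (fun t h0 h1 => by
      have := hP (t, 1 - t) (mem_frontier_of_dir ⟨h0.le, by simpa using h1.le, by simp⟩ (1, 0)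
        (fun s hs h => by have := h.2.2; simp at this; linarith))
      have h1' : 1 - t ≠ 0 := by linarith
      simpa [h0.ne', h1'] using this)
  exact ⟨P₃, by rw [bubble]; ring⟩

lemma bubble_ne_zero : bubble ≠ 0 := by
  intro h
  have := eval_bubble (1 / 3) (1 / 3)
  rw [h] at this
  norm_num at this

lemma totalDegree_bubble : bubble.totalDegree = 3 := by
  have hL : (1 - MvPolynomial.X 0 - MvPolynomial.X 1 : MvPolynomial (Fin 2) ℝ).totalDegree = 1 := by
    apply le_antisymm
    · refine (MvPolynomial.totalDegree_sub _ _).trans (max_le ?_ (by simp))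
      exact (MvPolynomial.totalDegree_sub _ _).trans (by simp)
    · rw [Nat.one_le_iff_ne_zero]
      intro h
      rw [MvPolynomial.totalDegree_eq_zero_iff_eq_C] at h
      have h0 := congrArg (MvPolynomial.eval ![0, 0]) h
      have h1 := congrArg (MvPolynomial.eval ![1, 0]) h
      rw [MvPolynomial.eval_C] at h0 h1
      rw [← h0] at h1
      simp at h1
  have hb := bubble_ne_zero
  unfold bubble at hb ⊢
  rw [MvPolynomial.totalDegree_mul_of_isDomain (left_ne_zero_of_mul hb) (right_ne_zero_of_mul hb),
    MvPolynomial.totalDegree_mul_of_isDomain (MvPolynomial.X_ne_zero _) (MvPolynomial.X_ne_zero _),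
    hL]
  simp

/-- Exponents of the monomials `m` such that `b m` has degree at most `k`. -/
def cofactorExps (k : ℕ) : Set (Fin 2 →₀ ℕ) := {n | (n.sum fun _ e => e) + 3 ≤ k}

lemma totalDegree_bubble_mul_le_iff (k : ℕ) (Q : MvPolynomial (Fin 2) ℝ) :
    (bubble * Q).totalDegree ≤ k ↔ Q ∈ MvPolynomial.restrictSupport ℝ (cofactorExps k) := by
  rw [MvPolynomial.mem_restrictSupport_iff]
  rcases eq_or_ne Q 0 with rfl | hQ
  · simp
  rw [MvPolynomial.totalDegree_mul_of_isDomain bubble_ne_zero hQ, totalDegree_bubble]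
  constructor
  · intro h n hn
    have := MvPolynomial.le_totalDegree hn
    simp only [cofactorExps, Set.mem_ofPred_eq]
    omega
  · intro h
    have hk : ∀ n ∈ Q.support, (n.sum fun _ e => e) + 3 ≤ k := fun n hn => h hn
    -- `Q` has a monomial, so `3 ≤ k` and the truncated `k - 3` below is the true difference.
    obtain ⟨n, hn⟩ := MvPolynomial.support_nonempty.2 hQ
    have h3 := hk n hn
    have : Q.totalDegree ≤ k - 3 := Finset.sup_le fun m hm => by have := hk m hm; omega
    omega

/-- The vector field with components `b p` and `b q`, as a linear function of `(p, q)`. -/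
def bubbleField :
    (MvPolynomial (Fin 2) ℝ × MvPolynomial (Fin 2) ℝ) →ₗ[ℝ] ((ℝ × ℝ) → ℝ × ℝ) where
  toFun p z := (MvPolynomial.eval ![z.1, z.2] (bubble * p.1),
    MvPolynomial.eval ![z.1, z.2] (bubble * p.2))
  map_add' p q := by ext z <;> simp [mul_add]
  map_smul' c p := by ext z <;> simp

lemma bubbleField_injective : Function.Injective bubbleField := by
  have key : ∀ p q : MvPolynomial (Fin 2) ℝ, (∀ z : ℝ × ℝ, MvPolynomial.eval ![z.1, z.2]
      (bubble * p) = MvPolynomial.eval ![z.1, z.2] (bubble * q)) → p = q := by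
    intro p q h
    apply mul_left_cancel₀ bubble_ne_zero
    apply MvPolynomial.funext
    intro x
    have hx : x = ![x 0, x 1] := by ext i; fin_cases i <;> rfl
    rw [hx]
    exact h (x 0, x 1)
  intro p q h
  exact Prod.ext (key _ _ fun z => congrArg Prod.fst (congrFun h z))
    (key _ _ fun z => congrArg Prod.snd (congrFun h z))

/-- `bubbleField` on pairs of cofactors of admissible degree. -/
def bubbleFieldDeg (k : ℕ) :
    (MvPolynomial.restrictSupport ℝ (cofactorExps k) ×
      MvPolynomial.restrictSupport ℝ (cofactorExps k)) →ₗ[ℝ] ((ℝ × ℝ) → ℝ × ℝ) :=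
  bubbleField.comp (LinearMap.prodMap (Submodule.subtype _) (Submodule.subtype _))

lemma bubbleFieldDeg_injective (k : ℕ) : Function.Injective (bubbleFieldDeg k) :=
  bubbleField_injective.comp
    (Function.Injective.prodMap (Submodule.subtype_injective _) (Submodule.subtype_injective _))

lemma VI_eq_range (k : ℕ) : VI k = (LinearMap.range (bubbleFieldDeg k) : Set _) := by
  ext v
  constructor
  · rintro ⟨⟨P, hPk, hP⟩, ⟨Q, hQk, hQ⟩, hv⟩
    obtain ⟨p, rfl⟩ := exists_bubble_mul P fun z hz => by rw [← hP z]; exact congrArg Prod.fst (hv z hz)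
    obtain ⟨q, rfl⟩ := exists_bubble_mul Q fun z hz => by rw [← hQ z]; exact congrArg Prod.snd (hv z hz)
    exact ⟨(⟨p, (totalDegree_bubble_mul_le_iff k p).1 hPk⟩,
      ⟨q, (totalDegree_bubble_mul_le_iff k q).1 hQk⟩),
      funext fun z => Prod.ext (hP z).symm (hQ z).symm⟩
  · rintro ⟨⟨⟨p, hp⟩, ⟨q, hq⟩⟩, rfl⟩
    refine ⟨⟨_, (totalDegree_bubble_mul_le_iff k p).2 hp, fun z => rfl⟩,
      ⟨_, (totalDegree_bubble_mul_le_iff k q).2 hq, fun z => rfl⟩, fun z hz => ?_⟩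
    simp [bubbleFieldDeg, bubbleField, eval_bubble_frontier hz]

lemma cofactorExps_eq (k : ℕ) : cofactorExps k =
    ((Finset.range (k - 2)).biUnion fun i =>
      Finset.finsuppAntidiag (Finset.univ : Finset (Fin 2)) i : Finset (Fin 2 →₀ ℕ)) := by
  ext n
  simp only [cofactorExps, Set.mem_ofPred_eq, Finset.coe_biUnion, Set.mem_iUnion, Finset.mem_coe,
    Finset.mem_range, Finset.mem_finsuppAntidiag', Finset.subset_univ, and_true, exists_prop,
    exists_eq_right']
  omega

lemma card_cofactorExps (k : ℕ) :
    Nat.card (cofactorExps k) * 2 = (k - 1) * (k - 2) := by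
  rw [cofactorExps_eq, Nat.card_coe_set_eq, Set.ncard_coe_finset, Finset.card_biUnion]
  · have hc : ∀ i : ℕ, (Finset.finsuppAntidiag (Finset.univ : Finset (Fin 2)) i).card = i + 1 := by
      intro i
      simp [Finset.card_finsuppAntidiag_nat_eq_choose, add_comm 1 i]
    simp only [hc]
    rcases Nat.lt_or_ge k 2 with h | h
    · have : k - 2 = 0 := by omega
      simp [this]
    · obtain ⟨m, rfl⟩ := Nat.exists_eq_add_of_le' h
      have h1 := Finset.sum_range_succ' (fun i => i) m
      have h2 := Finset.sum_range_id_mul_two (m + 1)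
      simp only [add_zero] at h1
      rw [h1] at h2
      simpa using h2
  · intro i _ j _ hij
    rw [Function.onFun, Finset.disjoint_left]
    intro n hi hj
    rw [Finset.mem_finsuppAntidiag] at hi hj
    exact hij (hi.1.symm.trans hj.1)

/-- For `k ≥ 1`, the space `V_I(T̂)` has dimension `(k−1)(k−2) = k² − 3k + 2`. -/
theorem dim_VI (k : ℕ) (hk : 1 ≤ k) :
    Set.finrank ℝ (VI k) = (k - 1) * (k - 2) := by
  have hfin : Finite (cofactorExps k) := by
    rw [cofactorExps_eq]
    exact Finset.finite_toSet _
  have B := MvPolynomial.basisRestrictSupport ℝ (cofactorExps k)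
  have : Module.Finite ℝ (MvPolynomial.restrictSupport ℝ (cofactorExps k)) := Module.Finite.of_basis B
  rw [Set.finrank, VI_eq_range, Submodule.span_eq,
    LinearMap.finrank_range_of_inj (bubbleFieldDeg_injective k), Module.finrank_prod,
    Module.finrank_eq_nat_card_basis B, ← card_cofactorExps]
  ring
end
end

section
/- Let k ≥ 2 be an integer, let I = {α ∈ ℤ³_{≥0} : |α| = k}, and fix β ∈ I with βᵢ < k for i = 1,2,3. Then the family {B^k_α − B^k_β : α ∈ I, α ≠ β} is a basis of the real vector space {p ∈ P_k : ∫_{T̂} p = 0} of polynomial functions of total degree at most k with vanishing mean over T̂. -/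
/-!
The Bernstein polynomials `B^k_α`, `|α| = k`, form a basis of `P_k`, and they all have the same
nonzero mean over the triangle: by Fubini and the one-dimensional beta integral
`∫₀ˢ (s - y)^a y^c dy = a! c! / (a + c + 1)! * s^(a + c + 1)`, each integral is `k! / (k + 2)!`
(`integral_bern`). Hence the zero-mean polynomials are exactly the combinations of the `B^k_α`
whose coefficients sum to zero, and the differences with a fixed `B^k_β` are a basis of these.

Independence (`linearIndependent_bern`): homogenizing by `λ_i = x_i / (x_0 + x_1 + x_2)` turns a
vanishing combination of the `B^k_α` into a ternary polynomial that vanishes on the positive octant,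
whose coefficients are then zero. Independence passes to the differences because a linearly
independent family is affinely independent.

Spanning (`polyFun_subset_span_bern`): a monomial of degree less than `k` is multiplied repeatedly by
`1 = λ₁ + λ₂ + λ₃` until it becomes a combination of homogeneous barycentric monomials of degree `k`.
-/

open MeasureTheory

noncomputable section

/-- The vertices `â₁ = (0,0)`, `â₂ = (1,0)`, `â₃ = (0,1)` of the reference triangle. -/
def vert : Fin 3 → ℝ × ℝ := ![(0, 0), (1, 0), (0, 1)]

/-- Barycentric coordinates `λ₁ = 1 − x − y`, `λ₂ = x`, `λ₃ = y` on the reference triangle. -/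
def bary : Fin 3 → (ℝ × ℝ) → ℝ := ![fun z => 1 - z.1 - z.2, fun z => z.1, fun z => z.2]

/-- The Bernstein polynomial `B^k_α = (k!/(α₁!α₂!α₃!)) λ₁^{α₁} λ₂^{α₂} λ₃^{α₃}`. -/
def bern (k : ℕ) (α : Fin 3 → ℕ) : (ℝ × ℝ) → ℝ := fun z =>
  ((Nat.factorial k : ℝ) /
      ((Nat.factorial (α 0) : ℝ) * (Nat.factorial (α 1) : ℝ) * (Nat.factorial (α 2) : ℝ))) *
    ((1 - z.1 - z.2) ^ (α 0) * z.1 ^ (α 1) * z.2 ^ (α 2))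

/-! ### Bernstein polynomials span the polynomials of degree at most `k` -/

/-- The multinomial coefficient in front of the Bernstein polynomial `B^k_α`. -/
def bernCoef (k : ℕ) (α : Fin 3 → ℕ) : ℝ :=
  (Nat.factorial k : ℝ) /
    ((Nat.factorial (α 0) : ℝ) * (Nat.factorial (α 1) : ℝ) * (Nat.factorial (α 2) : ℝ))

lemma bernCoef_ne_zero (k : ℕ) (α : Fin 3 → ℕ) : bernCoef k α ≠ 0 := by
  unfold bernCoef
  positivity

lemma bern_apply (k : ℕ) (α : Fin 3 → ℕ) (z : ℝ × ℝ) :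
    bern k α z = bernCoef k α * ((1 - z.1 - z.2) ^ (α 0) * z.1 ^ (α 1) * z.2 ^ (α 2)) := rfl

/-- The Bernstein polynomials of degree `k`, indexed by the multi-indices of sum `k`. -/
def bernFam (k : ℕ) (α : {α : Fin 3 → ℕ // α 0 + α 1 + α 2 = k}) : (ℝ × ℝ) → ℝ := bern k α.1

/-- The induction is on the defect `m = k - (a + b + c)`: multiplying by the sum of the barycentric
coordinates, which is `1`, raises the degree by one. -/
lemma baryMonomial_mem_span (k m : ℕ) : ∀ a b c : ℕ, a + b + c + m = k →
    (fun z : ℝ × ℝ => (1 - z.1 - z.2) ^ a * z.1 ^ b * z.2 ^ c) ∈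
      Submodule.span ℝ (Set.range (bernFam k)) := by
  induction m with
  | zero =>
    intro a b c h
    have hm : bernFam k ⟨![a, b, c], by simpa using h⟩ ∈
        Submodule.span ℝ (Set.range (bernFam k)) := Submodule.subset_span ⟨_, rfl⟩
    have := Submodule.smul_mem _ (bernCoef k ![a, b, c])⁻¹ hm
    convert this using 1
    funext z
    simp only [Pi.smul_apply, smul_eq_mul, bernFam, bern_apply]
    rw [inv_mul_cancel_left₀ (bernCoef_ne_zero _ _)]
    simp
  | succ m ih =>
    intro a b c h
    have h1 := ih (a + 1) b c (by omega)
    have h2 := ih a (b + 1) c (by omega)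
    have h3 := ih a b (c + 1) (by omega)
    convert Submodule.add_mem _ (Submodule.add_mem _ h1 h2) h3 using 1
    funext z
    simp only [Pi.add_apply]
    ring

lemma polyFun_subset_span_bern (k : ℕ) {p : (ℝ × ℝ) → ℝ} (hp : p ∈ PolyFun k) :
    p ∈ Submodule.span ℝ (Set.range (bernFam k)) := by
  obtain ⟨P, hP, hpP⟩ := hp
  have hsum : p = ∑ d ∈ P.support, P.coeff d •
      (fun z : ℝ × ℝ => (1 - z.1 - z.2) ^ 0 * z.1 ^ (d 0) * z.2 ^ (d 1)) := by
    funext z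
    rw [hpP z, MvPolynomial.eval_eq']
    simp [Finset.sum_apply, Fin.prod_univ_two]
  rw [hsum]
  refine Submodule.sum_mem _ fun d hd => Submodule.smul_mem _ _ ?_
  have hdeg : d 0 + d 1 ≤ k := by
    have := (MvPolynomial.le_totalDegree hd).trans hP
    rwa [Finsupp.sum_fintype _ _ (fun _ => rfl), Fin.sum_univ_two] at this
  exact baryMonomial_mem_span k (k - (d 0 + d 1)) 0 (d 0) (d 1) (by omega)

/-! ### Closure properties of polynomial functions -/

lemma polyFun_zero (k : ℕ) : (0 : (ℝ × ℝ) → ℝ) ∈ PolyFun k := ⟨0, by simp, by simp⟩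

lemma polyFun_add {k : ℕ} {p q : (ℝ × ℝ) → ℝ} (hp : p ∈ PolyFun k) (hq : q ∈ PolyFun k) :
    p + q ∈ PolyFun k := by
  obtain ⟨P, hP, hp⟩ := hp
  obtain ⟨Q, hQ, hq⟩ := hq
  exact ⟨P + Q, (MvPolynomial.totalDegree_add _ _).trans (max_le hP hQ),
    fun z => by simp [hp z, hq z]⟩

lemma polyFun_smul {k : ℕ} {p : (ℝ × ℝ) → ℝ} (r : ℝ) (hp : p ∈ PolyFun k) :
    r • p ∈ PolyFun k := by
  obtain ⟨P, hP, hp⟩ := hp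
  exact ⟨r • P, (MvPolynomial.totalDegree_smul_le _ _).trans hP, fun z => by simp [hp z]⟩

open MvPolynomial in
lemma bern_mem_polyFun (k : ℕ) (α : Fin 3 → ℕ) (hα : α 0 + α 1 + α 2 = k) :
    bern k α ∈ PolyFun k := by
  have hlin : (1 - X 0 - X 1 : MvPolynomial (Fin 2) ℝ).totalDegree ≤ 1 := by
    refine (totalDegree_sub _ _).trans (max_le ((totalDegree_sub _ _).trans (max_le ?_ ?_)) ?_)
    all_goals simp
  refine ⟨bernCoef k α • ((1 - X 0 - X 1) ^ (α 0) * X 0 ^ (α 1) * X 1 ^ (α 2)), ?_, ?_⟩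
  · refine (totalDegree_smul_le _ _).trans ?_
    have h0 := (totalDegree_pow (1 - X 0 - X 1 : MvPolynomial (Fin 2) ℝ) (α 0)).trans
      (Nat.mul_le_mul_left _ hlin)
    have h1 := totalDegree_mul ((1 - X 0 - X 1 : MvPolynomial (Fin 2) ℝ) ^ (α 0)) (X 0 ^ (α 1))
    have h2 := totalDegree_mul ((1 - X 0 - X 1 : MvPolynomial (Fin 2) ℝ) ^ (α 0) * X 0 ^ (α 1))
      (X 1 ^ (α 2))
    rw [totalDegree_X_pow] at h1 h2
    omega
  · intro z
    simp [bern_apply]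

lemma continuous_of_mem_polyFun {k : ℕ} {p : (ℝ × ℝ) → ℝ} (hp : p ∈ PolyFun k) :
    Continuous p := by
  obtain ⟨P, -, hp⟩ := hp
  rw [funext hp]
  refine (MvPolynomial.continuous_eval P).comp ?_
  refine continuous_pi fun i => ?_
  fin_cases i
  · exact continuous_fst
  · exact continuous_snd

/-! ### Linear independence -/

open MvPolynomial in
lemma linearIndependent_bern (k : ℕ) : LinearIndependent ℝ (bernFam k) := by
  classical
  rw [linearIndependent_iff']
  intro s g hg i hi
  -- The homogenization of the vanishing combination.
  let e : (Fin 3 → ℕ) → (Fin 3 →₀ ℕ) := Finsupp.equivFunOnFinite.symm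
  let Q : MvPolynomial (Fin 3) ℝ :=
    ∑ j ∈ s, monomial (e j.1) (g j * bernCoef k j.1)
  have hQ : Q = 0 := by
    refine funext_set (fun _ => Set.Ioi (0 : ℝ)) (fun _ => Set.Ioi_infinite 0) fun x hx => ?_
    have h0 : 0 < x 0 := hx 0 trivial
    have h1 : 0 < x 1 := hx 1 trivial
    have h2 : 0 < x 2 := hx 2 trivial
    set t := x 0 + x 1 + x 2 with ht
    have htpos : 0 < t := by positivity
    have hz := congrFun hg (x 1 / t, x 2 / t)
    have hl : 1 - x 1 / t - x 2 / t = x 0 / t := by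
      field_simp
      rw [ht]
      ring
    have hmul : eval x Q = t ^ k * (∑ j ∈ s, g j • bernFam k j) (x 1 / t, x 2 / t) := by
      rw [map_sum, Finset.sum_apply, Finset.mul_sum]
      refine Finset.sum_congr rfl fun j _ => ?_
      have hj : t ^ k = t ^ (j.1 0) * t ^ (j.1 1) * t ^ (j.1 2) := by
        rw [← pow_add, ← pow_add, j.2]
      rw [eval_monomial, Finsupp.prod_fintype _ _ (by simp), Fin.prod_univ_three, Pi.smul_apply,
        smul_eq_mul, bernFam, bern_apply, hl, hj]
      simp only [e, Finsupp.equivFunOnFinite_symm_apply_apply, div_pow]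
      field_simp
    rw [hmul, hz]
    simp
  have hc : coeff (e i.1) Q = g i * bernCoef k i.1 := by
    rw [coeff_sum, Finset.sum_eq_single i]
    · simp
    · intro j _ hji
      rw [coeff_monomial, if_neg]
      intro h
      exact hji (Subtype.ext (Finsupp.equivFunOnFinite.symm.injective h))
    · exact fun h => absurd hi h
  rw [hQ, coeff_zero] at hc
  exact (mul_eq_zero.mp hc.symm).resolve_right (bernCoef_ne_zero _ _)

/-! ### Integrals over the triangle -/

lemma isCompact_Tref : IsCompact Tref := by
  have hclosed : IsClosed Tref := by
    refine (isClosed_le continuous_const continuous_fst).inter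
      ((isClosed_le continuous_const continuous_snd).inter
        (isClosed_le (continuous_fst.add continuous_snd) continuous_const))
  refine (isCompact_Icc (a := ((0, 0) : ℝ × ℝ)) (b := (1, 1))).of_isClosed_subset hclosed ?_
  rintro ⟨x, y⟩ ⟨hx, hy, hxy⟩
  simp only at hx hy hxy
  exact ⟨⟨hx, hy⟩, ⟨by simp only; linarith, by simp only; linarith⟩⟩

/-- The beta integral on `[0, s]`; integration by parts trades a power of `s - y` for one of `y`. -/
lemma integral_beta (s : ℝ) (a : ℕ) : ∀ c : ℕ,
    ∫ y in (0 : ℝ)..s, (s - y) ^ a * y ^ c =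
      (a.factorial * c.factorial : ℝ) / (a + c + 1).factorial * s ^ (a + c + 1) := by
  induction a with
  | zero =>
    intro c
    simp only [pow_zero, one_mul, integral_pow, zero_add, Nat.factorial_succ]
    push_cast
    have : (c.factorial : ℝ) ≠ 0 := by positivity
    simp
    field_simp
  | succ a ih =>
    intro c
    have hder : ∀ y ∈ Set.uIcc 0 s, HasDerivAt (fun y : ℝ => (s - y) ^ (a + 1) * y ^ (c + 1))
        ((c + 1) * ((s - y) ^ (a + 1) * y ^ c) - (a + 1) * ((s - y) ^ a * y ^ (c + 1))) y := by
      intro y _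
      have h1 := ((hasDerivAt_id y).const_sub s).pow (a + 1)
      have h2 := (hasDerivAt_id y).pow (c + 1)
      refine (h1.mul h2).congr_deriv ?_
      simp only [Pi.pow_apply, id, Nat.add_sub_cancel]
      push_cast
      ring
    have hint := intervalIntegral.integral_eq_sub_of_hasDerivAt hder
      (Continuous.intervalIntegrable (by fun_prop) _ _)
    rw [intervalIntegral.integral_sub (Continuous.intervalIntegrable (by fun_prop) _ _)
      (Continuous.intervalIntegrable (by fun_prop) _ _), intervalIntegral.integral_const_mul,
      intervalIntegral.integral_const_mul, ih (c + 1)] at hint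
    have e1 : a + (c + 1) + 1 = a + 1 + c + 1 := by ring
    rw [e1] at hint
    have hc : (c + 1 : ℝ) ≠ 0 := by positivity
    refine mul_left_cancel₀ hc ?_
    simp only [sub_self, ne_eq, Nat.add_eq_zero_iff, one_ne_zero, and_false, not_false_eq_true,
      zero_pow, zero_mul, mul_zero] at hint
    rw [sub_eq_zero.mp hint, Nat.factorial_succ c, Nat.factorial_succ a]
    push_cast
    ring

lemma integral_Tref_eq {f : ℝ × ℝ → ℝ} (hf : Continuous f) :
    ∫ z in Tref, f z = ∫ x in (0 : ℝ)..1, ∫ y in (0 : ℝ)..(1 - x), f (x, y) := by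
  have hm := isCompact_Tref.measurableSet
  have hi : Integrable (Tref.indicator f) (volume : Measure (ℝ × ℝ)) :=
    (integrable_indicator_iff hm).2 (hf.continuousOn.integrableOn_compact isCompact_Tref)
  rw [← integral_indicator hm, Measure.volume_eq_prod, integral_prod _ hi,
    intervalIntegral.integral_of_le zero_le_one, ← integral_Icc_eq_integral_Ioc,
    ← integral_indicator measurableSet_Icc]
  congr 1
  funext x
  by_cases hx : x ∈ Set.Icc (0 : ℝ) 1
  · rw [Set.indicator_of_mem hx, intervalIntegral.integral_of_le (by linarith [hx.2]),
      ← integral_Icc_eq_integral_Ioc, ← integral_indicator measurableSet_Icc]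
    congr 1
    funext y
    have : (x, y) ∈ Tref ↔ y ∈ Set.Icc 0 (1 - x) := by
      simp only [Tref, Set.mem_ofPred_eq, Set.mem_Icc]
      exact ⟨fun h => ⟨h.2.1, by linarith [h.2.2]⟩, fun h => ⟨hx.1, h.1, by linarith [h.2]⟩⟩
    simp only [Set.indicator, this]
  · rw [Set.indicator_of_notMem hx]
    have : ∀ y, Tref.indicator f (x, y) = 0 := by
      intro y
      refine Set.indicator_of_notMem (fun h => hx ⟨h.1, ?_⟩) _
      have h1 := h.2.1
      have h2 := h.2.2
      simp only at h1 h2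
      linarith
    simp [this]

lemma integral_bern (k : ℕ) (α : Fin 3 → ℕ) (hα : α 0 + α 1 + α 2 = k) :
    ∫ z in Tref, bern k α z = (k.factorial : ℝ) / (k + 2).factorial := by
  rw [integral_Tref_eq (continuous_of_mem_polyFun (bern_mem_polyFun k α hα))]
  have hinner : ∀ x : ℝ, ∫ y in (0 : ℝ)..(1 - x), bern k α (x, y) =
      bernCoef k α * (((α 0).factorial * (α 2).factorial : ℝ) / (α 0 + α 2 + 1).factorial) *
        ((1 - x) ^ (α 0 + α 2 + 1) * x ^ (α 1)) := by
    intro x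
    have : ∀ y : ℝ, bern k α (x, y) =
        bernCoef k α * x ^ (α 1) * ((1 - x - y) ^ (α 0) * y ^ (α 2)) := by
      intro y
      simp only [bern_apply]
      ring
    simp only [this]
    rw [intervalIntegral.integral_const_mul, integral_beta]
    ring
  simp only [hinner]
  have e1 : α 0 + α 2 + 1 + α 1 + 1 = k + 2 := by omega
  rw [intervalIntegral.integral_const_mul, integral_beta, e1, one_pow, bernCoef]
  have h0 : ((α 0).factorial : ℝ) ≠ 0 := by positivity
  have h1 : ((α 1).factorial : ℝ) ≠ 0 := by positivity
  have h2 : ((α 2).factorial : ℝ) ≠ 0 := by positivity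
  have h3 : ((α 0 + α 2 + 1).factorial : ℝ) ≠ 0 := by positivity
  field_simp

lemma integrableOn_of_mem_polyFun {k : ℕ} {p : (ℝ × ℝ) → ℝ} (hp : p ∈ PolyFun k) :
    IntegrableOn p Tref :=
  (continuous_of_mem_polyFun hp).continuousOn.integrableOn_compact isCompact_Tref

/-! ### Differences of Bernstein polynomials -/

/-- The Bernstein polynomials all have the same mean, so subtracting a multiple of `B^k_β` that makes
the mean zero leaves a combination of the differences. -/
lemma sub_smul_bern_mem_span (k : ℕ) (β : Fin 3 → ℕ) {q : (ℝ × ℝ) → ℝ}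
    (hq : q ∈ Submodule.span ℝ (Set.range (bernFam k))) :
    q ∈ PolyFun k ∧ q - ((∫ z in Tref, q z) / ((k.factorial : ℝ) / (k + 2).factorial)) • bern k β ∈
      Submodule.span ℝ (Set.range
        (fun α : {α : Fin 3 → ℕ // α 0 + α 1 + α 2 = k ∧ α ≠ β} =>
          (fun z => bern k α.1 z - bern k β z : (ℝ × ℝ) → ℝ))) := by
  induction hq using Submodule.span_induction with
  | mem q hq =>
    obtain ⟨α, rfl⟩ := hq
    refine ⟨bern_mem_polyFun k α.1 α.2, ?_⟩
    have hK : (k.factorial : ℝ) / (k + 2).factorial ≠ 0 := by positivity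
    simp only [bernFam]
    rw [integral_bern k α.1 α.2, div_self hK, one_smul]
    by_cases h : α.1 = β
    · rw [h, sub_self]
      exact Submodule.zero_mem _
    · exact Submodule.subset_span ⟨⟨α.1, α.2, h⟩, rfl⟩
  | zero => exact ⟨polyFun_zero k, by simp⟩
  | add p q _ _ hp hq =>
    refine ⟨polyFun_add hp.1 hq.1, ?_⟩
    have hI : ∫ z in Tref, (p + q) z = (∫ z in Tref, p z) + ∫ z in Tref, q z :=
      integral_add (integrableOn_of_mem_polyFun hp.1) (integrableOn_of_mem_polyFun hq.1)
    rw [hI, add_div, add_smul, add_sub_add_comm]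
    exact Submodule.add_mem _ hp.2 hq.2
  | smul r p _ hp =>
    refine ⟨polyFun_smul r hp.1, ?_⟩
    have hI : ∫ z in Tref, (r • p) z = r * ∫ z in Tref, p z := integral_const_mul _ _
    rw [hI, mul_div_assoc, mul_smul, ← smul_sub]
    exact Submodule.smul_mem _ r hp.2

/-- For `k ≥ 2` and `β` a multi-index with `|β| = k` and `βᵢ < k`, the family
`{B^k_α − B^k_β : α ≠ β, |α| = k}` is a basis of `{p ∈ P_k : ∫_{T̂} p = 0}`:
it is linearly independent and spans exactly that space. -/
theorem bernstein_differences_basis (k : ℕ) (hk : 2 ≤ k) (β : Fin 3 → ℕ)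
    (hβsum : β 0 + β 1 + β 2 = k) (hβ : ∀ i, β i < k) :
    LinearIndependent ℝ
      (fun α : {α : Fin 3 → ℕ // α 0 + α 1 + α 2 = k ∧ α ≠ β} =>
        (fun z => bern k α.1 z - bern k β z : (ℝ × ℝ) → ℝ)) ∧
    (Submodule.span ℝ (Set.range
        (fun α : {α : Fin 3 → ℕ // α 0 + α 1 + α 2 = k ∧ α ≠ β} =>
          (fun z => bern k α.1 z - bern k β z : (ℝ × ℝ) → ℝ))) : Set ((ℝ × ℝ) → ℝ))
      = {p | p ∈ PolyFun k ∧ (∫ z in Tref, p z) = 0} := by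
  refine ⟨?_, Set.Subset.antisymm ?_ ?_⟩
  · have h := (affineIndependent_iff_linearIndependent_vsub ℝ (bernFam k) ⟨β, hβsum⟩).1
      (linearIndependent_bern k).affineIndependent
    refine h.comp (fun α : {α : Fin 3 → ℕ // α 0 + α 1 + α 2 = k ∧ α ≠ β} =>
      ⟨⟨α.1, α.2.1⟩, fun e => α.2.2 (congrArg Subtype.val e)⟩) ?_
    intro α α' e
    exact Subtype.ext (congrArg (fun γ => γ.1.1) e)
  · intro p hp
    simp only [SetLike.mem_coe] at hp
    induction hp using Submodule.span_induction with
    | mem q hq =>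
      obtain ⟨α, rfl⟩ := hq
      have hα := bern_mem_polyFun k α.1 α.2.1
      have hβ' := bern_mem_polyFun k β hβsum
      refine ⟨?_, ?_⟩
      · convert polyFun_add hα (polyFun_smul (-1) hβ') using 1
        funext z
        simp [sub_eq_add_neg]
      · rw [integral_sub (integrableOn_of_mem_polyFun hα) (integrableOn_of_mem_polyFun hβ'),
          integral_bern k _ α.2.1, integral_bern k _ hβsum, sub_self]
    | zero => exact ⟨polyFun_zero k, by simp⟩
    | add p q _ _ hp hq =>
      refine ⟨polyFun_add hp.1 hq.1, ?_⟩
      have hI : ∫ z in Tref, (p + q) z = (∫ z in Tref, p z) + ∫ z in Tref, q z :=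
        integral_add (integrableOn_of_mem_polyFun hp.1) (integrableOn_of_mem_polyFun hq.1)
      rw [hI, hp.2, hq.2, add_zero]
    | smul r p _ hp =>
      refine ⟨polyFun_smul r hp.1, ?_⟩
      have hI : ∫ z in Tref, (r • p) z = r * ∫ z in Tref, p z := integral_const_mul _ _
      rw [hI, hp.2, mul_zero]
  · rintro p ⟨hp, hp0⟩
    have h := (sub_smul_bern_mem_span k β (polyFun_subset_span_bern k hp)).2
    rwa [hp0, zero_div, zero_smul, sub_zero] at h
end
end
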